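/- Let n ≥ 6 be an even integer and let σ = (a b; 2^{n−1} d) ∈ SL₂(ℤ) (so a·d − 2^{n−1}·b = 1 with a, d odd). Then x_n vanishes to order 2^{n−4} and y_n vanishes to order 1 at the cusp a/2^{n−1}: there exist nonzero complex numbers ε₁ and ε₂ such that x_n(στ)·exp(−2πi·2^{n−4}·τ) → ε₁ and y_n(στ)·exp(−2πi·τ) → ε₂ as Im τ → ∞, where στ = (aτ+b)/(2^{n−1}τ+d). -/

import Mathlib

open Complex Filter Topology

/-- Jacobi theta function θ₂(τ) = ∑_{n∈ℤ} exp(πiτ(n+1/2)²). -/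
noncomputable def θ₂ (τ : ℂ) : ℂ :=
  ∑' n : ℤ, Complex.exp (Real.pi * Complex.I * τ * ((n : ℂ) + 1/2)^2)

/-- Jacobi theta function θ₃(τ) = ∑_{n∈ℤ} exp(πiτn²). -/
noncomputable def θ₃ (τ : ℂ) : ℂ :=
  ∑' n : ℤ, Complex.exp (Real.pi * Complex.I * τ * (n : ℂ)^2)

/-- x_n(τ) = 2θ₃(2^{n-1}τ)/θ₂(2^{n-1}τ). -/
noncomputable def xfun (n : ℕ) (τ : ℂ) : ℂ :=
  2 * θ₃ (2^(n-1) * τ) / θ₂ (2^(n-1) * τ)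

/-- y_n(τ) = θ₂(8τ)/θ₂(2^{n-1}τ). -/
noncomputable def yfun (n : ℕ) (τ : ℂ) : ℂ :=
  θ₂ (8 * τ) / θ₂ (2^(n-1) * τ)


lemma aux_exp_even (k m : ℤ) (h : Even (k - m)) (c : ℂ) :
    cexp (Real.pi * I * k + c) = cexp (Real.pi * I * m + c) := by
  obtain ⟨r, hr⟩ := h
  have : (k : ℂ) = m + (r + r) := by
    have : k = m + (r + r) := by omega
    exact_mod_cast this
  rw [this, show (Real.pi * I * ((m : ℂ) + (r + r)) + c) =
    (Real.pi * I * m + c) + r * (2 * Real.pi * I) by ring, Complex.exp_add,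
    Complex.exp_int_mul_two_pi_mul_I, mul_one]

lemma theta3_eq (τ : ℂ) : θ₃ τ = jacobiTheta₂ 0 τ := by
  unfold θ₃ jacobiTheta₂ jacobiTheta₂_term
  congr 1; ext n; congr 1; ring

lemma theta2_eq (τ : ℂ) : θ₂ τ = cexp (Real.pi * I * τ / 4) * jacobiTheta₂ (τ / 2) τ := by
  unfold θ₂ jacobiTheta₂ jacobiTheta₂_term
  rw [← tsum_mul_left]
  congr 1; ext n; rw [← Complex.exp_add]; congr 1; ring

lemma theta2_add_int (τ : ℂ) (a : ℤ) :
    θ₂ (τ + a) = cexp (Real.pi * I * a / 4) * θ₂ τ := by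
  unfold θ₂
  rw [← tsum_mul_left]
  congr 1; ext n; rw [← Complex.exp_add]
  have := aux_exp_even (a * (n * (n + 1))) 0 (by
    simpa using (Int.even_mul_succ_self n).mul_left a)
    (Real.pi * I * a / 4 + Real.pi * I * τ * ((n : ℂ) + 1/2)^2)
  rw [Int.cast_zero, mul_zero, zero_add] at this
  rw [← this]
  congr 1; push_cast; ring

lemma jac_add_odd (z τ : ℂ) (a : ℤ) (ha : Odd a) :
    jacobiTheta₂ z (τ + a) = jacobiTheta₂ (z + 1 / 2) τ := by
  unfold jacobiTheta₂ jacobiTheta₂_term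
  congr 1; ext n
  have := aux_exp_even (a * n ^ 2) n (by
    obtain ⟨k, rfl⟩ := ha
    have := Int.even_mul_pred_self n
    rw [show (2 * k + 1) * n ^ 2 - n = 2 * (k * n ^ 2) + n * (n - 1) by ring]
    exact (even_two_mul _).add this)
    (2 * Real.pi * I * n * z + Real.pi * I * n ^ 2 * τ)
  convert this using 2 <;> push_cast <;> ring

lemma theta3_add_odd (τ : ℂ) (a : ℤ) (ha : Odd a) : θ₃ (τ + a) = jacobiTheta₂ (1 / 2) τ := by
  rw [theta3_eq, jac_add_odd _ _ _ ha, zero_add]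

lemma sqrt_ne {τ : ℂ} (h : τ ≠ 0) : (-I * τ) ^ (1 / 2 : ℂ) ≠ 0 := by
  rw [Ne, cpow_eq_zero_iff, not_and_or]
  exact Or.inl <| mul_ne_zero (neg_ne_zero.mpr I_ne_zero) h

lemma sqrt_pow (τ : ℂ) : ((-I * τ) ^ (1 / 2 : ℂ)) ^ 8 = τ ^ 4 := by
  have h : ((-I * τ) ^ (1 / 2 : ℂ)) ^ 2 = -I * τ := by
    rw [← Complex.cpow_nat_mul]; norm_num
  rw [show 8 = 2 * 4 by norm_num, pow_mul, h, mul_pow, neg_pow, I_pow_four]; norm_num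

lemma theta2_S {τ : ℂ} (h : τ ≠ 0) :
    θ₂ (-1 / τ) = (-I * τ) ^ (1 / 2 : ℂ) * jacobiTheta₂ (1 / 2) τ := by
  have h1 := sqrt_ne h
  rw [theta2_eq, jacobiTheta₂_functional_equation (1 / 2) τ, ← jacobiTheta₂_neg_left (1 / 2 / τ)]
  rw [show (-(1 / 2 / τ)) = -1 / τ / 2 by ring,
    show (-Real.pi * I * (1 / 2) ^ 2 / τ : ℂ) = Real.pi * I * (-1 / τ) / 4 by ring]
  field_simp

lemma theta4_S {τ : ℂ} (h : τ ≠ 0) :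
    jacobiTheta₂ (1 / 2) (-1 / τ) = (-I * τ) ^ (1 / 2 : ℂ) * θ₂ τ := by
  have h1 := sqrt_ne h
  rw [theta2_eq, jacobiTheta₂_functional_equation (τ / 2) τ]
  rw [show τ / 2 / τ = 1 / 2 by field_simp,
    show (-Real.pi * I * (τ / 2) ^ 2 / τ : ℂ) = - (Real.pi * I * τ / 4) by field_simp; norm_num,
    Complex.exp_neg]
  have := Complex.exp_ne_zero (Real.pi * I * τ / 4)
  field_simp

lemma theta3_S {τ : ℂ} (h : τ ≠ 0) :
    θ₃ (-1 / τ) = (-I * τ) ^ (1 / 2 : ℂ) * θ₃ τ := by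
  have h1 := sqrt_ne h
  rw [theta3_eq, theta3_eq, jacobiTheta₂_functional_equation 0 τ]
  simp
  field_simp

lemma theta4_lim : Tendsto (fun τ : ℂ => jacobiTheta₂ (1 / 2) τ) (comap im atTop) (𝓝 1) := by
  have h3 : Tendsto jacobiTheta (comap im atTop) (𝓝 1) := by
    have h0 : Tendsto (fun τ : ℂ => Real.exp (-Real.pi * τ.im)) (comap im atTop) (𝓝 0) := by
      refine Real.tendsto_exp_atBot.comp ?_
      exact (tendsto_comap (f := im) (x := atTop)).const_mul_atTop_of_neg (by linarith [Real.pi_pos])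
    have := isBigO_at_im_infty_jacobiTheta_sub_one.trans_tendsto h0
    simpa using this.add_const 1
  have hT : Tendsto (fun τ : ℂ => τ + 1) (comap im atTop) (comap im atTop) := by
    rw [tendsto_comap_iff]
    refine tendsto_comap.congr fun τ => by simp
  refine (h3.comp hT).congr fun τ => ?_
  have := jac_add_odd 0 τ 1 odd_one
  simp only [Function.comp, jacobiTheta_eq_jacobiTheta₂]
  simpa using this

lemma theta2_lim : Tendsto (fun τ : ℂ => jacobiTheta₂ (τ / 2) τ) (comap im atTop) (𝓝 2) := by
  unfold jacobiTheta₂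
  have e : (∑' n : ℤ, (if n = 0 ∨ n = -1 then (1 : ℂ) else 0)) = 2 := by
    rw [tsum_eq_sum (s := {0, -1})]
    · rw [Finset.sum_pair (by norm_num)]; norm_num
    · intro b hb; simp at hb; simp [hb]
  have nm (n : ℤ) (τ : ℂ) : ‖jacobiTheta₂_term n (τ / 2) τ‖ =
      Real.exp (-Real.pi * (n * (n + 1)) * τ.im) := by
    rw [norm_jacobiTheta₂_term]; congr 1
    simp; ring
  have nn (n : ℤ) : (0 : ℝ) ≤ n * (n + 1) := by
    have : 0 ≤ n * (n + 1) := by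
      rcases le_or_gt 0 n with h | h <;> nlinarith
    exact_mod_cast this
  suffices h : Tendsto (fun τ : ℂ => ∑' n : ℤ, jacobiTheta₂_term n (τ / 2) τ) (comap im atTop)
      (𝓝 (∑' n : ℤ, (if n = 0 ∨ n = -1 then (1 : ℂ) else 0))) by rwa [e] at h
  clear e
  refine tendsto_tsum_of_dominated_convergence
    (bound := fun n : ℤ => Real.exp (-Real.pi * (n * (n + 1)) * 1)) ?_ ?_ ?_
  · have := ((summable_jacobiTheta₂_term_iff (I / 2) I).2 (by simp)).norm
    simpa only [nm, I_im] using this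
  · intro n
    split_ifs with h
    · refine tendsto_const_nhds.congr fun τ => ?_
      unfold jacobiTheta₂_term
      rw [eq_comm, ← Complex.exp_zero]
      congr 1
      rcases h with rfl | rfl <;> push_cast <;> ring
    · rw [tendsto_zero_iff_norm_tendsto_zero]
      simp only [nm]
      refine Real.tendsto_exp_atBot.comp ?_
      have : (0 : ℝ) < n * (n + 1) := by
        refine lt_of_le_of_ne (nn n) (Ne.symm ?_)
        push Not at h
        have h2 : n + 1 ≠ 0 := by omega
        exact_mod_cast mul_ne_zero h.1 h2
      exact (tendsto_comap (f := im) (x := atTop)).const_mul_atTop_of_neg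
        (by nlinarith [Real.pi_pos])
  · have : ∀ᶠ τ : ℂ in comap im atTop, 1 ≤ τ.im := tendsto_comap.eventually (eventually_ge_atTop 1)
    filter_upwards [this] with τ hτ n
    rw [nm, Real.exp_le_exp]
    have := mul_nonneg Real.pi_pos.le (nn n)
    nlinarith

open scoped UpperHalfPlane MatrixGroups ModularForm in
/-- The eighth powers of the theta constants, indexed by vectors mod 2. -/
noncomputable def Fth (p q : ZMod 2) (z : ℍ) : ℂ :=
  if p = 0 then (if q = 0 then 0 else θ₂ z ^ 8)
  else (if q = 0 then jacobiTheta₂ (1 / 2) z ^ 8 else θ₃ z ^ 8)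

open scoped UpperHalfPlane MatrixGroups ModularForm in
lemma Fth_S (p q : ZMod 2) : Fth p q ∣[(4 : ℤ)] ModularGroup.S = Fth q p := by
  ext z
  have hz : (z : ℂ) ≠ 0 := z.ne_zero
  have e : ((ModularGroup.S • z : ℍ) : ℂ) = -1 / z := by
    rw [UpperHalfPlane.modular_S_smul]; simp [neg_div]
  have hd : UpperHalfPlane.denom ModularGroup.S z = z := by
    rw [ModularGroup.denom_apply]; simp [ModularGroup.S]
  rw [ModularForm.SL_slash_apply, hd]
  have h4 : (z : ℂ) ^ (-4 : ℤ) = ((z : ℂ) ^ 4)⁻¹ := by rw [zpow_neg]; norm_cast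
  unfold Fth
  rw [e, theta2_S hz, theta3_S hz, theta4_S hz, mul_pow, mul_pow, mul_pow, sqrt_pow, h4]
  split_ifs <;> field_simp
  simp

open scoped UpperHalfPlane MatrixGroups ModularForm in
lemma Fth_T (p q : ZMod 2) : Fth p q ∣[(4 : ℤ)] ModularGroup.T = Fth p (p + q) := by
  ext z
  have e : ((ModularGroup.T • z : ℍ) : ℂ) = z + (1 : ℤ) := by
    rw [UpperHalfPlane.modular_T_smul]; simp [add_comm]
  have hd : UpperHalfPlane.denom ModularGroup.T z = 1 := by
    rw [ModularGroup.denom_apply]; simp [ModularGroup.T]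
  rw [ModularForm.SL_slash_apply, hd, one_zpow, mul_one]
  unfold Fth
  have h8 : cexp (Real.pi * I * (1 : ℤ) / 4) ^ 8 = 1 := by
    rw [← Complex.exp_nat_mul, ← Complex.exp_two_pi_mul_I]; congr 1; push_cast; ring
  have h4 : jacobiTheta₂ (1 / 2) (z + (1 : ℤ)) = θ₃ z := by
    rw [jac_add_odd _ _ _ odd_one, theta3_eq]
    have := jacobiTheta₂_add_left 0 z
    rw [← this]; norm_num
  rw [e, theta2_add_int, theta3_add_odd _ _ odd_one, h4, mul_pow, h8, one_mul]
  have hp : p = 0 ∨ p = 1 := by revert p; decide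
  have hq : q = 0 ∨ q = 1 := by revert q; decide
  have h2 : (1 + 1 : ZMod 2) = 0 := by decide
  rcases hp with rfl | rfl <;> rcases hq with rfl | rfl <;> simp [h2]

open scoped UpperHalfPlane MatrixGroups ModularForm in
lemma Fth_slash (γ : SL(2, ℤ)) : ∀ p q : ZMod 2, Fth p q ∣[(4 : ℤ)] γ =
    Fth (p * (γ 0 0 : ℤ) + q * (γ 1 0 : ℤ)) (p * (γ 0 1 : ℤ) + q * (γ 1 1 : ℤ)) := by
  have hγ : γ ∈ Subgroup.closure {ModularGroup.S, ModularGroup.T} := by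
    simp [SpecialLinearGroup.SL2Z_generators]
  induction hγ using Subgroup.closure_induction with
  | mem x hx =>
    intro p q
    rcases hx with rfl | rfl
    · rw [Fth_S]; simp [ModularGroup.S]
    · rw [Fth_T]; simp [ModularGroup.T]
  | one => intro p q; simp [SlashAction.slash_one]
  | mul x y _ _ hx hy =>
    intro p q
    rw [SlashAction.slash_mul, hx, hy]
    simp only [Matrix.SpecialLinearGroup.coe_mul, Matrix.mul_apply, Fin.sum_univ_two]
    push_cast
    congr 1 <;> ring
  | inv x _ hx =>
    intro p q
    have hd : ((x 0 0 : ℤ) : ZMod 2) * (x 1 1 : ℤ) - (x 0 1 : ℤ) * (x 1 0 : ℤ) = 1 := by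
      have := x.det_coe
      rw [Matrix.det_fin_two] at this
      exact_mod_cast congrArg (Int.cast : ℤ → ZMod 2) this
    have := hx (p * (x⁻¹ 0 0 : ℤ) + q * (x⁻¹ 1 0 : ℤ)) (p * (x⁻¹ 0 1 : ℤ) + q * (x⁻¹ 1 1 : ℤ))
    have h2 : Fth p q = Fth (p * (x⁻¹ 0 0 : ℤ) + q * (x⁻¹ 1 0 : ℤ))
        (p * (x⁻¹ 0 1 : ℤ) + q * (x⁻¹ 1 1 : ℤ)) ∣[(4 : ℤ)] x := by
      rw [this]
      simp only [Matrix.SpecialLinearGroup.SL2_inv_expl]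
      have two : (2 : ZMod 2) = 0 := by decide
      congr 1
      · simp
        linear_combination (-p) * hd + (-(p * (x 1 0 : ℤ) * (x 0 1 : ℤ)) -
          q * (x 1 0 : ℤ) * (x 0 0 : ℤ)) * two
      · simp
        linear_combination (-q) * hd + (-(q * (x 1 0 : ℤ) * (x 0 1 : ℤ)) -
          p * (x 1 1 : ℤ) * (x 0 1 : ℤ)) * two
    conv_lhs => rw [h2]
    rw [← SlashAction.slash_mul, mul_inv_cancel, SlashAction.slash_one]

open scoped UpperHalfPlane MatrixGroups ModularForm in
lemma theta2_mod (a b c d : ℤ) (h : a * d - b * c = 1) (hc : Even c) (z : ℂ) (hz : 0 < z.im) :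
    0 < ((a * z + b) / (c * z + d)).im ∧
    θ₂ ((a * z + b) / (c * z + d)) ^ 8 = (c * z + d) ^ 4 * θ₂ z ^ 8 := by
  let γ : SL(2, ℤ) := ⟨!![a, b; c, d], by rw [Matrix.det_fin_two_of, h]⟩
  have key := congrFun (Fth_slash γ 0 1) ⟨z, hz⟩
  have hc2 : (c : ZMod 2) = 0 := (ZMod.intCast_eq_zero_iff_even).2 hc
  have hd2 : (d : ZMod 2) = 1 := by
    rw [ZMod.intCast_eq_one_iff_odd]
    obtain ⟨k, rfl⟩ := hc
    have : Odd (a * d) := ⟨b * k, by linarith⟩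
    exact (Int.odd_mul.1 this).2
  have e1 : Fth (0 * (γ 0 0 : ℤ) + 1 * (γ 1 0 : ℤ)) (0 * (γ 0 1 : ℤ) + 1 * (γ 1 1 : ℤ)) =
      Fth 0 1 := by simp [γ, hc2, hd2]
  have key2 : (Fth 0 1 ∣[(4 : ℤ)] γ) ⟨z, hz⟩ = Fth 0 1 ⟨z, hz⟩ := by rw [key, e1]
  rw [ModularForm.slash_action_eq'_iff] at key2
  have e : ((γ • (⟨z, hz⟩ : ℍ) : ℍ) : ℂ) = (a * z + b) / (c * z + d) := by
    rw [UpperHalfPlane.coe_specialLinearGroup_apply]; simp [γ]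
  constructor
  · rw [← e]; exact (γ • (⟨z, hz⟩ : ℍ)).im_pos
  · unfold Fth at key2
    rw [e] at key2
    simp [γ] at key2
    exact_mod_cast key2

theorem zeros_at_cusp_2_pow_n_sub_one (n : ℕ) (hn : 6 ≤ n) (hn2 : Even n)
    (a b d : ℤ) (hdet : a * d - 2 ^ (n - 1) * b = 1) :
    ∃ ε₁ ε₂ : ℂ, ε₁ ≠ 0 ∧ ε₂ ≠ 0 ∧
      Tendsto (fun τ : ℂ =>
          xfun n (((a : ℂ) * τ + b) / ((2 ^ (n - 1) : ℂ) * τ + d)) *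
            Complex.exp (-(2 * Real.pi * Complex.I * (2 ^ (n - 4) : ℂ) * τ)))
        (comap Complex.im atTop) (𝓝 ε₁) ∧
      Tendsto (fun τ : ℂ =>
          yfun n (((a : ℂ) * τ + b) / ((2 ^ (n - 1) : ℂ) * τ + d)) *
            Complex.exp (-(2 * Real.pi * Complex.I * τ)))
        (comap Complex.im atTop) (𝓝 ε₂) := by
  have hN : (2 : ℤ) ^ (n - 1) = 8 * 2 ^ (n - 4) := by
    rw [show n - 1 = 3 + (n - 4) by omega, pow_add]; norm_num
  have hNC : (2 : ℂ) ^ (n - 1) = 8 * 2 ^ (n - 4) := by exact_mod_cast hN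
  have hMe : Even ((2 : ℤ) ^ (n - 4)) := (even_two).pow_of_ne_zero (by omega)
  have ha : Odd a := by
    obtain ⟨k, hk⟩ := hMe
    have : Odd (a * d) := ⟨8 * k * b, by rw [hN, hk] at hdet; linarith⟩
    exact (Int.odd_mul.1 this).1
  have hdetC : (a : ℂ) * d - 2 ^ (n - 1) * b = 1 := by exact_mod_cast hdet
  set w : ℂ → ℂ := fun τ => (2 ^ (n - 1) : ℂ) * τ + d with hw
  set s : ℂ → ℂ := fun τ => ((a : ℂ) * τ + b) / w τ with hs
  set r : ℂ → ℂ := fun τ => (-I * w τ) ^ (1 / 2 : ℂ) with hr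
  set E : ℂ := cexp (Real.pi * I * a / 4) with hE
  have hE0 : E ≠ 0 := Complex.exp_ne_zero _
  have him (τ : ℂ) : (w τ).im = 2 ^ (n - 1) * τ.im := by
    have : w τ = ((2 ^ (n - 1) : ℝ) : ℂ) * τ + ((d : ℝ) : ℂ) := by simp [hw]
    rw [this, add_im, im_ofReal_mul, ofReal_im, add_zero]
  have hw0 (τ : ℂ) (h : 0 < τ.im) : w τ ≠ 0 := by
    intro h0
    have h1 := him τ
    rw [h0, zero_im] at h1
    have : 0 < (2 : ℝ) ^ (n - 1) * τ.im := by positivity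
    linarith
  have hr0 (τ : ℂ) (h : 0 < τ.im) : r τ ≠ 0 := sqrt_ne (hw0 τ h)
  have hNs (τ : ℂ) (h : 0 < τ.im) : 2 ^ (n - 1) * s τ = -1 / w τ + a := by
    have := hw0 τ h
    simp only [hs]
    field_simp
    simp only [hw]
    linear_combination -hdetC
  have h2 (τ : ℂ) (h : 0 < τ.im) :
      θ₂ (2 ^ (n - 1) * s τ) = E * (r τ * jacobiTheta₂ (1 / 2) (w τ)) := by
    rw [hNs τ h, theta2_add_int, theta2_S (hw0 τ h)]
  have h3 (τ : ℂ) (h : 0 < τ.im) : θ₃ (2 ^ (n - 1) * s τ) = r τ * θ₂ (w τ) := by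
    rw [hNs τ h, theta3_add_odd _ _ ha, theta4_S (hw0 τ h)]
  have h8 (τ : ℂ) (h : 0 < τ.im) : 0 < (8 * s τ).im ∧
      θ₂ (8 * s τ) ^ 8 = w τ ^ 4 * θ₂ (8 * τ) ^ 8 := by
    have := theta2_mod a (8 * b) (2 ^ (n - 4)) d (by rw [hN] at hdet; linarith) hMe (8 * τ)
      (by simpa using h)
    have e1 : (((2 ^ (n - 4) : ℤ)) : ℂ) * (8 * τ) + d = w τ := by
      simp only [hw, hNC]; push_cast; ring
    have e2 : ((a : ℂ) * (8 * τ) + ((8 * b : ℤ) : ℂ)) / w τ = 8 * s τ := by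
      simp only [hs]; push_cast; ring
    rwa [e1, e2] at this
  have hpos : ∀ᶠ τ : ℂ in comap im atTop, 0 < τ.im :=
    tendsto_comap.eventually (eventually_gt_atTop 0)
  have hwl : Tendsto w (comap im atTop) (comap im atTop) := by
    rw [tendsto_comap_iff]
    refine ((tendsto_comap (f := im) (x := atTop)).const_mul_atTop
      (show (0 : ℝ) < 2 ^ (n - 1) by positivity)).congr fun τ => ?_
    simp [him]
  have h8l : Tendsto (fun τ : ℂ => 8 * τ) (comap im atTop) (comap im atTop) := by
    rw [tendsto_comap_iff]
    refine ((tendsto_comap (f := im) (x := atTop)).const_mul_atTop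
      (show (0 : ℝ) < 8 by positivity)).congr fun τ => ?_
    simp
  have L4 := theta4_lim.comp hwl
  have L2w := theta2_lim.comp hwl
  have L28 := theta2_lim.comp h8l
  have hc2 : ∀ z : ℂ, 0 < z.im → ContinuousAt θ₂ z := by
    intro z hz
    rw [show θ₂ = fun τ => _ from funext theta2_eq]
    have : ContinuousAt (fun τ : ℂ => jacobiTheta₂ (τ / 2) τ) z :=
      ContinuousAt.comp (f := fun τ : ℂ => ((τ / 2, τ) : ℂ × ℂ))
        (g := fun p : ℂ × ℂ => jacobiTheta₂ p.1 p.2) (continuousAt_jacobiTheta₂ (z / 2) hz)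
        (by fun_prop)
    exact ContinuousAt.mul (by fun_prop) this
  -- nonvanishing region
  have hne : ∀ᶠ τ : ℂ in comap im atTop, θ₂ (8 * τ) ≠ 0 := by
    filter_upwards [L28.eventually_ne (two_ne_zero)] with τ hτ
    rw [theta2_eq]
    exact mul_ne_zero (Complex.exp_ne_zero _) hτ
  obtain ⟨R, hR0, hR⟩ : ∃ R : ℝ, 0 < R ∧ ∀ τ : ℂ, R < τ.im → θ₂ (8 * τ) ≠ 0 := by
    rw [eventually_comap, eventually_atTop] at hne
    obtain ⟨R, hR⟩ := hne
    exact ⟨max R 1, by positivity, fun τ hτ => hR τ.im ((le_max_left _ _).trans hτ.le) τ rfl⟩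
  set h : ℂ → ℂ := fun τ => θ₂ (8 * s τ) / (r τ * θ₂ (8 * τ)) with hh
  have hpow : ∀ τ : ℂ, R < τ.im → h τ ^ 8 = 1 := by
    intro τ hτ
    have hp := hR0.trans hτ
    simp only [hh]
    have hr8 : r τ ^ 8 = w τ ^ 4 := sqrt_pow _
    rw [div_pow, mul_pow, (h8 τ hp).2, hr8]
    exact div_self (mul_ne_zero (pow_ne_zero _ (hw0 τ hp)) (pow_ne_zero _ (hR τ hτ)))
  have hcont : ContinuousOn h {τ : ℂ | R < τ.im} := by
    intro τ hτ
    have hτ' : R < τ.im := hτ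
    have hp := hR0.trans hτ'
    have cw : ContinuousAt w τ := by simp only [hw]; fun_prop
    have cs : ContinuousAt s τ := by
      simp only [hs]
      exact ContinuousAt.div (by fun_prop) cw (hw0 τ hp)
    have cr : ContinuousAt r τ := by
      refine ContinuousAt.cpow (by fun_prop) (by fun_prop) (Or.inl ?_)
      have h1 : (-I * w τ).re = (w τ).im := by simp
      rw [h1, him]; positivity
    have c1 : ContinuousAt (fun τ => θ₂ (8 * s τ)) τ :=
      ContinuousAt.comp (f := fun τ => 8 * s τ) (g := θ₂) (hc2 _ (h8 τ hp).1) (by fun_prop)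
    have c2 : ContinuousAt (fun τ => θ₂ (8 * τ)) τ :=
      ContinuousAt.comp (f := fun τ => 8 * τ) (g := θ₂) (hc2 _ (by simpa using hp)) (by fun_prop)
    exact (c1.div (cr.mul c2) (mul_ne_zero (hr0 τ hp) (hR τ hτ'))).continuousWithinAt
  have hfin : Set.Finite {z : ℂ | z ^ 8 = 1} := by
    refine (Polynomial.nthRoots 8 (1 : ℂ)).toFinset.finite_toSet.subset fun z hz => ?_
    simpa [Polynomial.mem_nthRoots] using hz
  have hconn : IsPreconnected {τ : ℂ | R < τ.im} := (convex_halfSpace_im_gt R).isPreconnected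
  have hmem : R < (((R + 1 : ℝ) : ℂ) * I).im := by simp
  set κ : ℂ := h (((R + 1 : ℝ) : ℂ) * I) with hκ
  have hconst : ∀ τ : ℂ, R < τ.im → h τ = κ := fun τ hτ =>
    hconn.constant_of_mapsTo hfin.isDiscrete hcont (fun τ hτ => hpow τ hτ) hτ hmem
  have hκ0 : κ ≠ 0 := by
    intro h0
    have := hpow _ hmem
    rw [← hκ, h0] at this
    norm_num at this
  have hRev : ∀ᶠ τ : ℂ in comap im atTop, R < τ.im :=
    tendsto_comap.eventually (eventually_gt_atTop R)
  set D : ℂ := cexp (Real.pi * I * d / 4) with hD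
  have hD0 : D ≠ 0 := Complex.exp_ne_zero _
  refine ⟨2 * D / E * (2 / 1), κ / E * (2 / 1), by simp [hD0, hE0], by simp [hκ0, hE0], ?_, ?_⟩
  · refine ((L2w.div L4 one_ne_zero).const_mul (2 * D / E)).congr' ?_
    filter_upwards [hpos, L4.eventually_ne one_ne_zero] with τ hp h4
    have e : cexp (Real.pi * I * w τ / 4) =
        D * cexp (2 * Real.pi * I * (2 ^ (n - 4) : ℂ) * τ) := by
      rw [hD, ← Complex.exp_add]; congr 1
      simp only [hw, hNC]; ring
    simp only [Function.comp] at h4 ⊢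
    change _ = xfun n (s τ) * _
    rw [xfun, h2 τ hp, h3 τ hp, theta2_eq, e, Complex.exp_neg]
    have := hr0 τ hp
    have := Complex.exp_ne_zero (2 * Real.pi * I * (2 ^ (n - 4) : ℂ) * τ)
    simp only [Pi.div_apply, Function.comp_apply]
    field_simp
  · refine ((L28.div L4 one_ne_zero).const_mul (κ / E)).congr' ?_
    filter_upwards [hRev, L4.eventually_ne one_ne_zero] with τ hτ h4
    have hp := hR0.trans hτ
    have e : cexp (Real.pi * I * (8 * τ) / 4) = cexp (2 * Real.pi * I * τ) := by
      congr 1; ring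
    simp only [Function.comp] at h4 ⊢
    change _ = yfun n (s τ) * _
    have hk := hconst τ hτ
    simp only [hh] at hk
    rw [div_eq_iff (mul_ne_zero (hr0 τ hp) (hR τ hτ))] at hk
    rw [yfun, h2 τ hp, hk, theta2_eq, e, Complex.exp_neg]
    have := hr0 τ hp
    have := Complex.exp_ne_zero (2 * Real.pi * I * τ)
    simp only [Pi.div_apply, Function.comp_apply]
    field_simp
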